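/- arXiv:1510.05795 — 2 statements merged into one kernel-verified Lean document; each statement's English description precedes it below -/
import Mathlib

section
/- Let p be an odd prime, c_p := (p−2)/(p−1), and M ∈ ℤ. Let (a_n)_{n≥0} be a sequence in ℚ_p with ‖a_n‖_p ≤ p^{-n·c_p} for all n, and let (μ_j)_{j≥0} be a sequence in ℤ_p with ‖μ_j‖_p ≤ p^{-(M - j·c_p)} for all j. Then for each j ≥ 0 the family (a_n·μ_{n+j})_{n≥0} is summable in ℚ_p, its sum ν_j lies in ℤ_p, and ‖ν_j‖_p ≤ p^{-(M - j·c_p)}. -/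
/-!
With `r = b ^ (-c)`, the moment condition says that the weighted norms `r ^ j * ‖μ j‖` are bounded
by `b ^ (-M)`. Since `‖a n‖ ≤ r ^ n`, each term of the `j`-th product moment satisfies
`r ^ j * ‖a n * μ (n + j)‖ ≤ r ^ (n + j) * ‖μ (n + j)‖`, and the ultrametric inequality passes this
bound to the sum. Taking the weight `1` instead of `r` gives the integrality of the product moments;
convergence is geometric because `r < 1`.
-/

section WeightedBounds

variable {R : Type*} [NormedRing R] {a μ : ℕ → R} {r B C : ℝ}

theorem summable_mul_comp_add_of_norm_le_pow [CompleteSpace R] (hr : r < 1)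
    (ha : ∀ n, ‖a n‖ ≤ r ^ n) (hμ : ∀ j, ‖μ j‖ ≤ B) (j : ℕ) :
    Summable fun n ↦ a n * μ (n + j) := by
  have hr0 : 0 ≤ r := by simpa using (norm_nonneg _).trans (ha 1)
  refine .of_norm_bounded ((summable_geometric_of_lt_one hr0 hr).mul_right B) fun n ↦ ?_
  exact norm_mul_le_of_le (ha n) (hμ (n + j))

theorem pow_mul_norm_tsum_mul_comp_add_le [IsUltrametricDist R] (hr : 0 < r)
    (ha : ∀ n, ‖a n‖ ≤ r ^ n) (hμ : ∀ j, r ^ j * ‖μ j‖ ≤ C) (j : ℕ) :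
    r ^ j * ‖∑' n, a n * μ (n + j)‖ ≤ C := by
  have hterm (n : ℕ) : r ^ j * ‖a n * μ (n + j)‖ ≤ C :=
    calc
      r ^ j * ‖a n * μ (n + j)‖ ≤ r ^ j * (r ^ n * ‖μ (n + j)‖) := by
        gcongr
        exact norm_mul_le_of_le (ha n) le_rfl
      _ = r ^ (n + j) * ‖μ (n + j)‖ := by ring
      _ ≤ C := hμ (n + j)
  rw [← le_div_iff₀' (pow_pos hr j)]
  exact (IsUltrametricDist.norm_tsum_le _).trans
    (ciSup_le fun n ↦ (le_div_iff₀' (pow_pos hr j)).mpr (hterm n))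

end WeightedBounds

theorem le_rpow_neg_sub_natCast_mul_iff {b : ℝ} (hb : 0 < b) (c M x : ℝ) (j : ℕ) :
    x ≤ b ^ (-(M - j * c)) ↔ (b ^ (-c)) ^ j * x ≤ b ^ (-M) := by
  have hexp : b ^ (-(M - j * c)) = b ^ (-M) / (b ^ (-c)) ^ j := by
    rw [← Real.rpow_mul_natCast hb.le, ← Real.rpow_sub hb]
    congr 1
    ring
  rw [hexp, le_div_iff₀' (by positivity)]

theorem sub_two_div_sub_one_pos_of_odd {n : ℕ} (hn : 1 < n) (hodd : Odd n) :
    0 < ((n : ℝ) - 2) / ((n : ℝ) - 1) := by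
  have two_lt : (2 : ℝ) < n := by
    obtain ⟨k, rfl⟩ := hodd
    exact_mod_cast (by lia : 2 < 2 * k + 1)
  exact div_pos (by linarith) (by linarith)

theorem stmt14_general {R : Type*} [NormedRing R] [CompleteSpace R] [IsUltrametricDist R]
    {b c M B : ℝ} (hb : 1 < b) (hc : 0 < c) {a μ : ℕ → R}
    (ha : ∀ n : ℕ, ‖a n‖ ≤ b ^ (-(n * c)))
    (hμB : ∀ j, ‖μ j‖ ≤ B) (hμ : ∀ j : ℕ, ‖μ j‖ ≤ b ^ (-(M - j * c))) (j : ℕ) :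
    Summable (fun n ↦ a n * μ (n + j)) ∧
    ‖∑' n, a n * μ (n + j)‖ ≤ B ∧
    ‖∑' n, a n * μ (n + j)‖ ≤ b ^ (-(M - j * c)) := by
  have hb0 : 0 < b := one_pos.trans hb
  have hr0 : 0 < b ^ (-c) := Real.rpow_pos_of_pos hb0 _
  have hr1 : b ^ (-c) < 1 := Real.rpow_lt_one_of_one_lt_of_neg hb (neg_neg_of_pos hc)
  have ha_pow (n : ℕ) : ‖a n‖ ≤ (b ^ (-c)) ^ n := by
    rw [← Real.rpow_mul_natCast hb0.le, neg_mul, mul_comm c]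
    exact ha n
  have ha_one (n : ℕ) : ‖a n‖ ≤ 1 ^ n := by
    simpa only [one_pow] using (ha_pow n).trans (pow_le_one₀ hr0.le hr1.le)
  refine ⟨summable_mul_comp_add_of_norm_le_pow hr1 ha_pow hμB j, ?_, ?_⟩
  · simpa using pow_mul_norm_tsum_mul_comp_add_le one_pos ha_one (by simpa using hμB) j
  · simp only [le_rpow_neg_sub_natCast_mul_iff hb0] at hμ ⊢
    exact pow_mul_norm_tsum_mul_comp_add_le hr0 ha_pow hμ j

/-- Let `p` be an odd prime, `c_p = (p-2)/(p-1)`, `M ∈ ℤ`.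
Let `(aₙ)` in `ℚ_p` with `‖aₙ‖ ≤ p^{-n c_p}` and `(μⱼ)` in `ℤ_p` with
`‖μⱼ‖ ≤ p^{-(M - j c_p)}`.  Then for each `j ≥ 0` the family `(aₙ μ_{n+j})ₙ` is
summable in `ℚ_p`, its sum `νⱼ` lies in `ℤ_p` (`‖νⱼ‖ ≤ 1`), and
`‖νⱼ‖ ≤ p^{-(M - j c_p)}`. -/
theorem stmt14 (p : ℕ) [Fact p.Prime] (hp : Odd p) (M : ℤ)
    (a : ℕ → ℚ_[p])
    (ha : ∀ n : ℕ, ‖a n‖ ≤ (p : ℝ) ^ (-((n : ℝ) * (((p : ℝ) - 2) / ((p : ℝ) - 1)))))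
    (μ : ℕ → ℤ_[p])
    (hμ : ∀ j : ℕ, ‖μ j‖ ≤
      (p : ℝ) ^ (-((M : ℝ) - (j : ℝ) * (((p : ℝ) - 2) / ((p : ℝ) - 1)))))
    (j : ℕ) :
    Summable (fun n : ℕ => a n * ((μ (n + j) : ℚ_[p]))) ∧
    ‖∑' n : ℕ, a n * ((μ (n + j) : ℚ_[p]))‖ ≤ 1 ∧
    ‖∑' n : ℕ, a n * ((μ (n + j) : ℚ_[p]))‖ ≤
      (p : ℝ) ^ (-((M : ℝ) - (j : ℝ) * (((p : ℝ) - 2) / ((p : ℝ) - 1)))) := by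
  have hp1 : 1 < p := (Fact.out : p.Prime).one_lt
  exact stmt14_general (Nat.one_lt_cast.mpr hp1) (sub_two_div_sub_one_pos_of_odd hp1 hp) ha
    (fun j ↦ (μ j).norm_le_one) hμ j
end

section
/- Let p be an odd prime, M ≥ 0 an integer, and let m be the unique integer with p^m ≤ M+1 < p^{m+1} (i.e. m = ⌊log(M+1)/log p⌋). Let B_k denote the k-th Bernoulli number (either standard sign convention for B_1). Then: (i) for all integers j, r with 1 ≤ j ≤ r+1 and r ≤ M, the rational number (p^m/j)·C(r, j−1)·B_{r−j+1} is a p-adic integer (its p-adic norm is at most 1); (ii) for all integers j, r with 1 ≤ j ≤ r+1 and r > M, the rational number (p^{r−M+m}/j)·C(r, j−1)·B_{r−j+1} is a p-adic integer. -/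
/-! By von Staudt–Clausen, `p` divides the denominator of `B_k` at most once, and only if
`p - 1 ∣ k` with `k > 0`. Since `C(r, i) / (i + 1) = C(r + 1, i + 1) / (r + 1)`, the power of `p`
needed to clear the denominator of `C(r, i) / (i + 1)` is at most the smaller of the valuations of
`i + 1` and `r + 1`. When `r + 1 < p ^ (e + 1)` both valuations are at most `e`, so `p ^ e` clears
that denominator. If `B_{r - i}` contributes a further `p`, then one of the two valuations is less
than `e`: otherwise the coprime numbers `p ^ e` and `p - 1` would both divide `r - i > 0`, forcing
`r + 1 ≥ p ^ e + p ^ e * (p - 1) = p ^ (e + 1)`. -/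

theorem not_pow_dvd_and_pow_dvd_of_lt_pow_succ {p e a b : ℕ} (ha : 0 < a) (hab : a < b)
    (hb : b < p ^ (e + 1)) (hdvd : p - 1 ∣ b - a) : ¬ (p ^ e ∣ a ∧ p ^ e ∣ b) := by
  rintro ⟨hpa, hpb⟩
  have hp : 1 ≤ p := Nat.pos_of_ne_zero (by rintro rfl; simp at hb)
  have hcop : (p ^ e).Coprime (p - 1) :=
    .pow_left e ((Nat.coprime_self_sub_right hp).mpr (Nat.coprime_one_right p))
  have hle : p ^ e * (p - 1) ≤ b - a :=
    Nat.le_of_dvd (Nat.sub_pos_of_lt hab)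
      (hcop.mul_dvd_of_dvd_of_dvd (Nat.dvd_sub hpb hpa) hdvd)
  have hpow : p ^ (e + 1) = p ^ e * (p - 1) + p ^ e := by
    rw [pow_succ, ← Nat.mul_add_one, Nat.sub_add_cancel hp]
  have := Nat.le_of_dvd ha hpa
  omega

theorem add_lt_pow_add {p a b : ℕ} (hp : 1 < p) (h : a < p ^ b) (d : ℕ) :
    a + d < p ^ (b + d) :=
  calc a + d < (a + 1) * (d + 1) := by nlinarith
    _ ≤ p ^ b * p ^ d := Nat.mul_le_mul h (Nat.lt_pow_self hp)
    _ = p ^ (b + d) := (pow_add p b d).symm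

theorem choose_div_add_one_eq {K : Type*} [Field K] [CharZero K] (r i : ℕ) :
    (r.choose i : K) / (i + 1 : ℕ) = ((r + 1).choose (i + 1) : K) / (r + 1 : ℕ) := by
  rw [div_eq_div_iff (Nat.cast_ne_zero.mpr i.succ_ne_zero) (Nat.cast_ne_zero.mpr r.succ_ne_zero)]
  exact_mod_cast (mul_comm _ _).trans (Nat.add_one_mul_choose_eq r i)

section PadicIntegrality

variable {p : ℕ} [Fact p.Prime]

theorem pow_div_natCast_mem_subring {s x : ℕ} (h : ¬ p ^ (s + 1) ∣ x) :
    (p : ℚ_[p]) ^ s / x ∈ PadicInt.subring p := by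
  have hnorm : (p : ℝ) ^ (-s : ℤ) ≤ ‖(x : ℚ_[p])‖ := by
    contrapose! h
    have hlt : ‖((x : ℤ) : ℚ_[p])‖ < (p : ℝ) ^ (-(s + 1 : ℕ) + 1 : ℤ) := by simpa using h
    exact_mod_cast (Padic.norm_int_le_pow_iff_dvd _ _).mp
      ((Padic.norm_le_pow_iff_norm_lt_pow_add_one _ _).mpr hlt)
  rw [PadicInt.mem_subring_iff, norm_div, Padic.norm_p_pow]
  exact div_le_one_of_le₀ hnorm (norm_nonneg _)

theorem pow_div_mul_choose_mem_subring {s i r : ℕ}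
    (h : ¬ (p ^ (s + 1) ∣ i + 1 ∧ p ^ (s + 1) ∣ r + 1)) :
    (p : ℚ_[p]) ^ s / (i + 1 : ℕ) * r.choose i ∈ PadicInt.subring p := by
  rcases not_and_or.mp h with hi | hr
  · exact mul_mem (pow_div_natCast_mem_subring hi) (natCast_mem _ _)
  · rw [div_mul_eq_mul_div, mul_div_assoc, choose_div_add_one_eq, mul_div_left_comm, mul_comm]
    exact mul_mem (pow_div_natCast_mem_subring hr) (natCast_mem _ _)

theorem pow_mul_bernoulli_mem_subring {s k : ℕ}
    (h : ∀ q : ℕ, q.Prime → q - 1 ∣ k → ¬ p ^ (s + 1) ∣ q) :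
    (p : ℚ_[p]) ^ s * (bernoulli k : ℚ) ∈ PadicInt.subring p := by
  have hp : (p : ℚ_[p]) ^ s ∈ PadicInt.subring p := pow_mem (natCast_mem _ p) s
  rcases Nat.even_or_odd' k with ⟨l, rfl | rfl⟩
  · obtain ⟨T, hT⟩ := Bernoulli.vonStaudt_clausen l
    rw [eq_sub_of_add_eq hT.symm]
    push_cast
    rw [mul_sub, Finset.mul_sum]
    refine sub_mem (mul_mem hp (intCast_mem _ T)) (sum_mem fun q hq ↦ ?_)
    obtain ⟨-, hq_prime, hq_dvd⟩ := Finset.mem_filter.mp hq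
    rw [mul_one_div]
    exact pow_div_natCast_mem_subring (h q hq_prime hq_dvd)
  · rcases Nat.eq_zero_or_pos l with rfl | hl
    · have htwo := pow_div_natCast_mem_subring (h 2 Nat.prime_two (one_dvd _))
      simpa [bernoulli_one, neg_div, div_eq_mul_inv] using neg_mem htwo
    · rw [bernoulli_eq_zero_of_odd (odd_two_mul_add_one l) (by omega), Rat.cast_zero, mul_zero]
      exact zero_mem _

theorem prime_mul_bernoulli_mem_subring (k : ℕ) :
    (p : ℚ_[p]) * (bernoulli k : ℚ) ∈ PadicInt.subring p := by
  have hp : p.Prime := Fact.out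
  have hsq (q : ℕ) (hq : q.Prime) : ¬ p ^ (1 + 1) ∣ q := fun hdvd ↦
    Nat.squarefree_iff_prime_squarefree.mp hq.squarefree p hp (sq p ▸ hdvd)
  simpa only [pow_one] using pow_mul_bernoulli_mem_subring fun q hq _ ↦ hsq q hq

theorem bernoulli_mem_subring_of_not_dvd {k : ℕ} (h : ¬ p - 1 ∣ k) :
    ((bernoulli k : ℚ) : ℚ_[p]) ∈ PadicInt.subring p := by
  have hp : p.Prime := Fact.out
  have hne (q : ℕ) (hq : q.Prime) (hqk : q - 1 ∣ k) : ¬ p ^ (0 + 1) ∣ q := by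
    rw [zero_add, pow_one, Nat.prime_dvd_prime_iff_eq hp hq]
    rintro rfl
    exact h hqk
  simpa only [pow_zero, one_mul] using pow_mul_bernoulli_mem_subring hne

theorem pow_div_mul_choose_mul_bernoulli_mem_subring {e i k : ℕ}
    (h : i + k + 1 < p ^ (e + 1)) :
    (p : ℚ_[p]) ^ e / (i + 1 : ℕ) * (i + k).choose i * (bernoulli k : ℚ) ∈
      PadicInt.subring p := by
  have hchoose : (p : ℚ_[p]) ^ e / (i + 1 : ℕ) * (i + k).choose i ∈ PadicInt.subring p :=
    pow_div_mul_choose_mem_subring fun hdvd ↦ Nat.not_dvd_of_pos_of_lt (by omega) h hdvd.2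
  rcases Nat.eq_zero_or_pos k with rfl | hk
  · simpa only [bernoulli_zero, Rat.cast_one, mul_one] using hchoose
  by_cases hdvd : p - 1 ∣ k
  · have hnot : ¬ (p ^ e ∣ i + 1 ∧ p ^ e ∣ i + k + 1) :=
      not_pow_dvd_and_pow_dvd_of_lt_pow_succ (by omega) (by omega) h
        (by rwa [show i + k + 1 - (i + 1) = k by omega])
    obtain ⟨s, rfl⟩ : ∃ s, e = s + 1 :=
      Nat.exists_eq_succ_of_ne_zero (by rintro rfl; simp at hnot)
    convert mul_mem (pow_div_mul_choose_mem_subring hnot) (prime_mul_bernoulli_mem_subring k)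
      using 1
    ring
  · exact mul_mem hchoose (bernoulli_mem_subring_of_not_dvd hdvd)

end PadicIntegrality

theorem stmt15_general (p : ℕ) [Fact p.Prime] (M m : ℕ) (hm : M + 1 < p ^ (m + 1)) :
    (∀ j r : ℕ, 1 ≤ j → j ≤ r + 1 → r ≤ M →
      ‖((((p : ℚ) ^ m / (j : ℚ)) * (r.choose (j - 1) : ℚ) *
        bernoulli (r + 1 - j) : ℚ) : ℚ_[p])‖ ≤ 1) ∧
    (∀ j r : ℕ, 1 ≤ j → j ≤ r + 1 → M < r →
      ‖((((p : ℚ) ^ (r - M + m) / (j : ℚ)) * (r.choose (j - 1) : ℚ) *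
        bernoulli (r + 1 - j) : ℚ) : ℚ_[p])‖ ≤ 1) := by
  have hintegral (e j r : ℕ) (hj : 1 ≤ j) (hjr : j ≤ r + 1) (hr : r + 1 < p ^ (e + 1)) :
      ‖((((p : ℚ) ^ e / (j : ℚ)) * (r.choose (j - 1) : ℚ) *
        bernoulli (r + 1 - j) : ℚ) : ℚ_[p])‖ ≤ 1 := by
    obtain ⟨i, rfl⟩ := Nat.exists_eq_add_of_le' hj
    obtain ⟨k, rfl⟩ := Nat.exists_eq_add_of_le (Nat.le_of_succ_le_succ hjr)
    rw [Nat.add_sub_cancel, show i + k + 1 - (i + 1) = k by omega]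
    simpa only [PadicInt.mem_subring_iff, Rat.cast_mul, Rat.cast_div, Rat.cast_pow,
      Rat.cast_natCast] using pow_div_mul_choose_mul_bernoulli_mem_subring hr
  refine ⟨fun j r hj hjr hr ↦ hintegral m j r hj hjr (by omega),
    fun j r hj hjr hr ↦ hintegral (r - M + m) j r hj hjr ?_⟩
  calc r + 1 = M + 1 + (r - M) := by omega
    _ < p ^ (m + 1 + (r - M)) := add_lt_pow_add (Fact.out : p.Prime).one_lt hm _
    _ = p ^ (r - M + m + 1) := by congr 1; omega

/-- Let `p` be an odd prime, `M ≥ 0`, and `m` the unique integer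
with `p^m ≤ M+1 < p^{m+1}`.  With `B_k` the `k`-th Bernoulli number:
(i) for `1 ≤ j ≤ r+1` and `r ≤ M`, `(p^m/j)·C(r,j-1)·B_{r-j+1}` is a `p`-adic
integer; (ii) for `1 ≤ j ≤ r+1` and `r > M`, `(p^{r-M+m}/j)·C(r,j-1)·B_{r-j+1}` is
a `p`-adic integer. -/
theorem stmt15 (p : ℕ) [Fact p.Prime] (hp : Odd p) (M m : ℕ)
    (hm1 : p ^ m ≤ M + 1) (hm2 : M + 1 < p ^ (m + 1)) :
    (∀ j r : ℕ, 1 ≤ j → j ≤ r + 1 → r ≤ M →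
      ‖((((p : ℚ) ^ m / (j : ℚ)) * (r.choose (j - 1) : ℚ) *
        bernoulli (r + 1 - j) : ℚ) : ℚ_[p])‖ ≤ 1) ∧
    (∀ j r : ℕ, 1 ≤ j → j ≤ r + 1 → M < r →
      ‖((((p : ℚ) ^ (r - M + m) / (j : ℚ)) * (r.choose (j - 1) : ℚ) *
        bernoulli (r + 1 - j) : ℚ) : ℚ_[p])‖ ≤ 1) :=
  stmt15_general p M m hm2
end
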